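/- arXiv:1503.08467 — 4 statements merged into one kernel-verified Lean document; each statement's English description precedes it below -/
import Mathlib

section
/- Let X be a metric space and let Y be a subspace of X. If player TWO has a winning strategy in the game G^1_d(𝒪,𝒪_Y) on X, then Y is contained in a closed, strongly zero-dimensional subset of X. -/
namespace SSG

/-- A family of subsets of a topological space is *discrete* if every point has a
neighborhood meeting at most one member of the family. -/
def IsDiscreteFam {X : Type*} [TopologicalSpace X] (𝒜 : Set (Set X)) : Prop :=
  ∀ x : X, ∃ U ∈ nhds x, {A | A ∈ 𝒜 ∧ (A ∩ U).Nonempty}.Subsingleton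

/-- A family of open subsets covering the whole space. -/
def IsOpenCover {X : Type*} [TopologicalSpace X] (𝒰 : Set (Set X)) : Prop :=
  (∀ U ∈ 𝒰, IsOpen U) ∧ ⋃₀ 𝒰 = Set.univ

/-- A legal move of TWO in the selective strong screenability game, in response to the
open cover `𝒰` played by ONE: a discrete family of open sets, each contained in some
member of `𝒰`. -/
def LegalTwoMove {X : Type*} [TopologicalSpace X] (𝒰 𝒱 : Set (Set X)) : Prop :=
  IsDiscreteFam 𝒱 ∧ ∀ V ∈ 𝒱, IsOpen V ∧ ∃ U ∈ 𝒰, V ⊆ U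

/-- ONE has a winning strategy in the game `G^ω_d(𝒪, 𝒪_Y)` on `X`:
there is a strategy `σ` (a function from finite histories of TWO's moves to open covers)
such that for every play in which TWO moves legally, the union of TWO's families fails
to cover `Y`. -/
def OneWinsGomega (X : Type*) [TopologicalSpace X] (Y : Set X) : Prop :=
  ∃ σ : List (Set (Set X)) → Set (Set X),
    (∀ h : List (Set (Set X)), IsOpenCover (σ h)) ∧
    ∀ V : ℕ → Set (Set X),
      (∀ n : ℕ, LegalTwoMove (σ (List.ofFn fun i : Fin n => V i)) (V n)) →
      ¬ Y ⊆ ⋃ n : ℕ, ⋃₀ V n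

/-- TWO has a winning strategy in the game `G^ω_d(𝒪, 𝒪_Y)` on `X`:
a strategy `τ` (from finite histories of ONE's moves, including the current inning's move,
to TWO's responses) such that against any sequence of open covers played by ONE, all of
TWO's responses are legal and their union covers `Y`. -/
def TwoWinsGomega (X : Type*) [TopologicalSpace X] (Y : Set X) : Prop :=
  ∃ τ : List (Set (Set X)) → Set (Set X),
    ∀ U : ℕ → Set (Set X), (∀ n : ℕ, IsOpenCover (U n)) →
      (∀ n : ℕ, LegalTwoMove (U n) (τ (List.ofFn fun i : Fin (n+1) => U i))) ∧
      Y ⊆ ⋃ n : ℕ, ⋃₀ τ (List.ofFn fun i : Fin (n+1) => U i)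

/-- TWO has a winning strategy in the one-inning game `G^1_d(𝒪, 𝒪_Y)` on `X`:
every open cover of `X` admits a discrete family of open sets, each contained in some
member of the cover, whose union contains `Y`. -/
def TwoWinsGone (X : Type*) [TopologicalSpace X] (Y : Set X) : Prop :=
  ∀ 𝒰 : Set (Set X), IsOpenCover 𝒰 →
    ∃ 𝒱 : Set (Set X), LegalTwoMove 𝒰 𝒱 ∧ Y ⊆ ⋃₀ 𝒱

/-- ONE has a winning strategy in the Banach–Mazur game `MB(Y,X)`: a strategy `σ`
(from finite histories of TWO's moves to ONE's next move) which always produces a legal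
move (a nonempty open set contained in TWO's last move) whenever TWO has moved legally
so far, and such that for every play in which TWO moves legally,
`Y ∩ ⋂ₙ Oₙ` is nonempty. -/
def OneWinsMB (X : Type*) [TopologicalSpace X] (Y : Set X) : Prop :=
  ∃ σ : List (Set X) → Set X,
    (∀ T : ℕ → Set X, ∀ n : ℕ,
      (∀ k : ℕ, k < n → IsOpen (T k) ∧ (T k).Nonempty ∧
          T k ⊆ σ (List.ofFn fun i : Fin k => T i)) →
      IsOpen (σ (List.ofFn fun i : Fin n => T i)) ∧
      (σ (List.ofFn fun i : Fin n => T i)).Nonempty ∧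
      ∀ k : ℕ, n = k + 1 → σ (List.ofFn fun i : Fin n => T i) ⊆ T k) ∧
    ∀ T : ℕ → Set X,
      (∀ n : ℕ, IsOpen (T n) ∧ (T n).Nonempty ∧
          T n ⊆ σ (List.ofFn fun i : Fin n => T i)) →
      (Y ∩ ⋂ n : ℕ, σ (List.ofFn fun i : Fin n => T i)).Nonempty

/-- TWO has a winning strategy in the Banach–Mazur game `MB(Y,X)`: a strategy `τ`
(from finite histories of ONE's moves to TWO's next move) which always produces a legal
move (a nonempty open subset of ONE's last move) whenever ONE has moved legally
so far, and such that for every play in which ONE moves legally,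
`Y ∩ ⋂ₙ Oₙ` is empty. -/
def TwoWinsMB (X : Type*) [TopologicalSpace X] (Y : Set X) : Prop :=
  ∃ τ : List (Set X) → Set X,
    (∀ O : ℕ → Set X, ∀ n : ℕ,
      (∀ k : ℕ, k ≤ n → IsOpen (O k) ∧ (O k).Nonempty ∧
          ∀ j : ℕ, k = j + 1 → O k ⊆ τ (List.ofFn fun i : Fin (j+1) => O i)) →
      IsOpen (τ (List.ofFn fun i : Fin (n+1) => O i)) ∧
      (τ (List.ofFn fun i : Fin (n+1) => O i)).Nonempty ∧
      τ (List.ofFn fun i : Fin (n+1) => O i) ⊆ O n) ∧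
    ∀ O : ℕ → Set X,
      (∀ n : ℕ, IsOpen (O n) ∧ (O n).Nonempty ∧
          ∀ j : ℕ, n = j + 1 → O n ⊆ τ (List.ofFn fun i : Fin (j+1) => O i)) →
      Y ∩ ⋂ n : ℕ, O n = ∅

/-- A space is ultraparacompact if every open cover has a refinement by pairwise
disjoint open sets still covering the space. -/
def Ultraparacompact (X : Type*) [TopologicalSpace X] : Prop :=
  ∀ 𝒰 : Set (Set X), IsOpenCover 𝒰 →
    ∃ 𝒱 : Set (Set X), (∀ V ∈ 𝒱, IsOpen V ∧ ∃ U ∈ 𝒰, V ⊆ U) ∧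
      𝒱.Pairwise Disjoint ∧ ⋃₀ 𝒱 = Set.univ

/-- A space is zero-dimensional if every point has a neighborhood basis of clopen sets. -/
def ZeroDimensional (X : Type*) [TopologicalSpace X] : Prop :=
  ∀ (x : X) (U : Set X), IsOpen U → x ∈ U → ∃ V : Set X, IsClopen V ∧ x ∈ V ∧ V ⊆ U

/-- A space is strongly zero-dimensional if every *finite* open cover has a refinement
by pairwise disjoint open sets still covering the space. -/
def StronglyZeroDim (X : Type*) [TopologicalSpace X] : Prop :=
  ∀ 𝒰 : Set (Set X), 𝒰.Finite → IsOpenCover 𝒰 →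
    ∃ 𝒱 : Set (Set X), (∀ V ∈ 𝒱, IsOpen V ∧ ∃ U ∈ 𝒰, V ⊆ U) ∧
      𝒱.Pairwise Disjoint ∧ ⋃₀ 𝒱 = Set.univ

/-- `X` has a π-base consisting of nontrivial connected (open) sets. -/
def HasConnectedPiBase (X : Type*) [TopologicalSpace X] : Prop :=
  ∃ P : Set (Set X), (∀ B ∈ P, IsOpen B ∧ IsConnected B ∧ B.Nontrivial) ∧
    ∀ U : Set X, IsOpen U → U.Nonempty → ∃ B ∈ P, B ⊆ U

/-!
Apply TWO's one-inning winning strategy to an open cover whose members have closures inside given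
open sets. The closures of the members of the resulting discrete family again form a discrete
family, and local finiteness makes them cover `closure Y`. Within `closure Y` each of these closed
sets is the complement of the union of the others, which is closed by local finiteness, so the
closures trace a partition of `closure Y` into clopen sets refining the given cover.
-/

section DiscreteFamilies

variable {X : Type*} [TopologicalSpace X] {𝒜 : Set (Set X)}

theorem IsDiscreteFam.locallyFinite (h𝒜 : IsDiscreteFam 𝒜) :
    LocallyFinite (Subtype.val : 𝒜 → Set X) := by
  intro x
  obtain ⟨N, hN, hsub⟩ := h𝒜 x
  refine ⟨N, hN, Set.Subsingleton.finite ?_⟩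
  exact fun A hA B hB => Subtype.ext (hsub ⟨A.2, hA⟩ ⟨B.2, hB⟩)

theorem IsDiscreteFam.pairwise_disjoint (h𝒜 : IsDiscreteFam 𝒜) : 𝒜.Pairwise Disjoint := by
  intro A hA B hB hAB
  refine Set.disjoint_left.2 fun x hxA hxB => hAB ?_
  obtain ⟨N, hN, hsub⟩ := h𝒜 x
  have hxN : x ∈ N := mem_of_mem_nhds hN
  exact hsub ⟨hA, x, hxA, hxN⟩ ⟨hB, x, hxB, hxN⟩

theorem IsDiscreteFam.mono {ℬ : Set (Set X)} (h𝒜 : IsDiscreteFam 𝒜) (hℬ : ℬ ⊆ 𝒜) :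
    IsDiscreteFam ℬ := fun x =>
  let ⟨N, hN, hsub⟩ := h𝒜 x
  ⟨N, hN, hsub.anti fun _ hB => ⟨hℬ hB.1, hB.2⟩⟩

theorem IsDiscreteFam.image_closure (h𝒜 : IsDiscreteFam 𝒜) : IsDiscreteFam (closure '' 𝒜) := by
  intro x
  obtain ⟨N, hN, hsub⟩ := h𝒜 x
  refine ⟨interior N, interior_mem_nhds.2 hN, ?_⟩
  have meets {A : Set X} (hA : (closure A ∩ interior N).Nonempty) : (A ∩ N).Nonempty :=
    ((closure_inter_open_nonempty_iff isOpen_interior).1 hA).mono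
      (Set.inter_subset_inter_right A interior_subset)
  rintro _ ⟨⟨A, hA, rfl⟩, hAN⟩ _ ⟨⟨B, hB, rfl⟩, hBN⟩
  rw [hsub ⟨hA, meets hAN⟩ ⟨hB, meets hBN⟩]

theorem IsDiscreteFam.image_preimage {Z : Type*} [TopologicalSpace Z] {f : Z → X}
    (h𝒜 : IsDiscreteFam 𝒜) (hf : Continuous f) : IsDiscreteFam (Set.preimage f '' 𝒜) := by
  intro z
  obtain ⟨N, hN, hsub⟩ := h𝒜 (f z)
  refine ⟨f ⁻¹' N, hf.continuousAt.preimage_mem_nhds hN, ?_⟩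
  rintro _ ⟨⟨A, hA, rfl⟩, a, haA, haN⟩ _ ⟨⟨B, hB, rfl⟩, b, hbB, hbN⟩
  rw [hsub ⟨hA, f a, haA, haN⟩ ⟨hB, f b, hbB, hbN⟩]

theorem IsDiscreteFam.closure_sUnion (h𝒜 : IsDiscreteFam 𝒜) :
    closure (⋃₀ 𝒜) = ⋃₀ (closure '' 𝒜) := by
  rw [Set.sUnion_eq_iUnion, h𝒜.locallyFinite.closure_iUnion, Set.sUnion_image,
    Set.biUnion_eq_iUnion]

theorem IsDiscreteFam.isClosed_sUnion (h𝒜 : IsDiscreteFam 𝒜) (hclosed : ∀ A ∈ 𝒜, IsClosed A) :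
    IsClosed (⋃₀ 𝒜) := by
  rw [Set.sUnion_eq_iUnion]
  exact h𝒜.locallyFinite.isClosed_iUnion fun A => hclosed A A.2

theorem IsDiscreteFam.isOpen_of_isClosed_of_sUnion_eq_univ (h𝒜 : IsDiscreteFam 𝒜)
    (hclosed : ∀ A ∈ 𝒜, IsClosed A) (hcover : ⋃₀ 𝒜 = Set.univ) {A : Set X} (hA : A ∈ 𝒜) :
    IsOpen A := by
  have hothers : IsClosed (⋃₀ (𝒜 \ {A})) :=
    (h𝒜.mono Set.sdiff_subset).isClosed_sUnion fun B hB => hclosed B hB.1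
  have hdisj : Disjoint A (⋃₀ (𝒜 \ {A})) :=
    Set.disjoint_sUnion_right.2 fun B hB => h𝒜.pairwise_disjoint hA hB.1 (Ne.symm hB.2)
  have hunion : A ∪ ⋃₀ (𝒜 \ {A}) = Set.univ := by
    rw [← Set.sUnion_insert, Set.insert_sdiff_singleton, Set.insert_eq_of_mem hA, hcover]
  have hcompl : IsCompl A (⋃₀ (𝒜 \ {A})) := ⟨hdisj, codisjoint_iff.2 hunion⟩
  exact hcompl.symm.compl_eq ▸ hothers.isOpen_compl

end DiscreteFamilies

section OpenCovers

variable {X : Type*} [TopologicalSpace X]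

theorem IsOpenCover.exists_closure_subset [RegularSpace X] {𝒰 : Set (Set X)}
    (h𝒰 : IsOpenCover 𝒰) :
    ∃ 𝒲 : Set (Set X), IsOpenCover 𝒲 ∧ ∀ W ∈ 𝒲, ∃ U ∈ 𝒰, closure W ⊆ U := by
  refine ⟨{W | IsOpen W ∧ ∃ U ∈ 𝒰, closure W ⊆ U}, ⟨fun W hW => hW.1, ?_⟩, fun W hW => hW.2⟩
  refine Set.eq_univ_of_forall fun x => ?_
  obtain ⟨U, hU, hxU⟩ : x ∈ ⋃₀ 𝒰 := h𝒰.2 ▸ Set.mem_univ x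
  obtain ⟨F, hF, hFclosed, hFU⟩ := exists_mem_nhds_isClosed_subset ((h𝒰.1 U hU).mem_nhds hxU)
  exact ⟨interior F, ⟨isOpen_interior, U, hU, hFclosed.closure_interior_subset.trans hFU⟩,
    mem_interior_iff_mem_nhds.2 hF⟩

theorem IsOpenCover.exists_preimage_val_mem {C : Set X} {𝒰 : Set (Set C)} (h𝒰 : IsOpenCover 𝒰)
    (hC : IsClosed C) :
    ∃ 𝒪 : Set (Set X), IsOpenCover 𝒪 ∧ ∀ O ∈ 𝒪, (Subtype.val ⁻¹' O : Set C) ∈ insert ∅ 𝒰 := by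
  refine ⟨{O | IsOpen O ∧ (Subtype.val ⁻¹' O : Set C) ∈ insert ∅ 𝒰},
    ⟨fun O hO => hO.1, Set.eq_univ_of_forall fun x => ?_⟩, fun O hO => hO.2⟩
  by_cases hx : x ∈ C
  · obtain ⟨U, hU, hxU⟩ : (⟨x, hx⟩ : C) ∈ ⋃₀ 𝒰 := h𝒰.2 ▸ Set.mem_univ _
    obtain ⟨O, hO, rfl⟩ := isOpen_induced_iff.1 (h𝒰.1 U hU)
    exact ⟨O, ⟨hO, Or.inr hU⟩, hxU⟩
  · have hempty : (Subtype.val ⁻¹' Cᶜ : Set C) = ∅ := by simp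
    exact ⟨Cᶜ, ⟨hC.isOpen_compl, Or.inl hempty⟩, hx⟩

end OpenCovers

theorem TwoWinsGone.exists_isDiscreteFam_isClosed {X : Type*} [TopologicalSpace X]
    [RegularSpace X] {Y : Set X} (h : TwoWinsGone X Y) {𝒪 : Set (Set X)} (h𝒪 : IsOpenCover 𝒪) :
    ∃ ℱ : Set (Set X), IsDiscreteFam ℱ ∧ (∀ F ∈ ℱ, IsClosed F ∧ ∃ O ∈ 𝒪, F ⊆ O) ∧
      closure Y ⊆ ⋃₀ ℱ := by
  obtain ⟨𝒲, h𝒲, h𝒲𝒪⟩ := h𝒪.exists_closure_subset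
  obtain ⟨𝒱, ⟨hdiscrete, h𝒱𝒲⟩, hY⟩ := h 𝒲 h𝒲
  refine ⟨closure '' 𝒱, hdiscrete.image_closure, ?_,
    hdiscrete.closure_sUnion ▸ closure_mono hY⟩
  rintro _ ⟨V, hV, rfl⟩
  obtain ⟨-, W, hW, hVW⟩ := h𝒱𝒲 V hV
  obtain ⟨O, hO, hWO⟩ := h𝒲𝒪 W hW
  exact ⟨isClosed_closure, O, hO, (closure_mono hVW).trans hWO⟩

theorem Ultraparacompact.of_exists_isDiscreteFam_isClosed {X : Type*} [TopologicalSpace X]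
    (h : ∀ 𝒰 : Set (Set X), IsOpenCover 𝒰 → ∃ ℱ : Set (Set X), IsDiscreteFam ℱ ∧
      (∀ F ∈ ℱ, IsClosed F ∧ ∃ U ∈ 𝒰, F ⊆ U) ∧ ⋃₀ ℱ = Set.univ) :
    Ultraparacompact X := by
  intro 𝒰 h𝒰
  obtain ⟨ℱ, hdiscrete, hℱ, hcover⟩ := h 𝒰 h𝒰
  have hopen (F : Set X) (hF : F ∈ ℱ) : IsOpen F :=
    hdiscrete.isOpen_of_isClosed_of_sUnion_eq_univ (fun F hF => (hℱ F hF).1) hcover hF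
  exact ⟨ℱ, fun F hF => ⟨hopen F hF, (hℱ F hF).2⟩, hdiscrete.pairwise_disjoint, hcover⟩

theorem Ultraparacompact.stronglyZeroDim {X : Type*} [TopologicalSpace X]
    (h : Ultraparacompact X) : StronglyZeroDim X :=
  fun 𝒰 _ h𝒰 => h 𝒰 h𝒰

theorem statement14_general {X : Type*} [TopologicalSpace X] [RegularSpace X] (Y : Set X)
    (h : TwoWinsGone X Y) : Ultraparacompact ↥(closure Y) := by
  refine .of_exists_isDiscreteFam_isClosed fun 𝒰 h𝒰 => ?_
  obtain ⟨𝒪, h𝒪, h𝒪𝒰⟩ := h𝒰.exists_preimage_val_mem isClosed_closure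
  obtain ⟨ℱ, hdiscrete, hℱ, hcover⟩ := h.exists_isDiscreteFam_isClosed h𝒪
  let traces : Set (Set (closure Y)) := Set.preimage Subtype.val '' ℱ
  have htraces : IsDiscreteFam traces := hdiscrete.image_preimage continuous_subtype_val
  refine ⟨traces \ {∅}, htraces.mono Set.sdiff_subset, ?_, ?_⟩
  · rintro _ ⟨⟨F, hF, rfl⟩, hne⟩
    obtain ⟨hFclosed, O, hO, hFO⟩ := hℱ F hF
    refine ⟨hFclosed.preimage continuous_subtype_val, _, ?_, Set.preimage_mono hFO⟩
    refine (h𝒪𝒰 O hO).resolve_left fun hempty => hne ?_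
    exact Set.subset_eq_empty (Set.preimage_mono hFO) hempty
  · rw [Set.sUnion_sdiff_singleton_empty, Set.sUnion_image, ← Set.preimage_iUnion₂,
      ← Set.sUnion_eq_biUnion]
    exact Set.eq_univ_of_forall fun y => hcover y.2

/-- If `X` is a metric space and TWO has a winning strategy in
`G^1_d(𝒪,𝒪_Y)` on `X`, then `Y` is contained in a closed strongly zero-dimensional
subset of `X`. -/
theorem statement14 {X : Type*} [MetricSpace X] (Y : Set X) (h : TwoWinsGone X Y) :
    ∃ C : Set X, IsClosed C ∧ StronglyZeroDim ↥C ∧ Y ⊆ C :=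
  ⟨closure Y, isClosed_closure, (statement14_general Y h).stronglyZeroDim, subset_closure⟩

end SSG
end

section
/- On the real line ℝ, player TWO has a winning strategy in the game G^ω_d(𝒪,𝒪_ℚ), but TWO does not have a winning strategy in the game G^1_d(𝒪,𝒪_ℚ), where ℚ is the set of rational numbers. -/
/-!
On a countable set TWO wins the infinite game by covering the `n`-th point in inning `n`: a family
with a single member is always discrete. Conversely, if a discrete family covers a dense set, then
near any point of the closure of a member `A` that family consists of `A` alone, so that closure is
clopen. In a connected space `A` is therefore dense, which is impossible if ONE plays a cover by
non-dense open sets.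
-/

namespace SSG

section

variable {X : Type*} [TopologicalSpace X] {Y : Set X}

theorem isDiscreteFam_of_subsingleton {𝒜 : Set (Set X)} (h𝒜 : 𝒜.Subsingleton) :
    IsDiscreteFam 𝒜 :=
  fun _ => ⟨Set.univ, Filter.univ_mem, h𝒜.anti (Set.sep_subset _ _)⟩

theorem IsOpenCover.exists_mem {𝒰 : Set (Set X)} (h𝒰 : IsOpenCover 𝒰) (x : X) :
    ∃ U ∈ 𝒰, x ∈ U :=
  Set.mem_sUnion.1 (h𝒰.2 ▸ Set.mem_univ x)

theorem twoWinsGone_of_subsingleton (hY : Y.Subsingleton) : TwoWinsGone X Y := by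
  intro 𝒰 h𝒰
  obtain rfl | ⟨x, rfl⟩ := hY.eq_empty_or_singleton
  · exact ⟨∅, ⟨isDiscreteFam_of_subsingleton Set.subsingleton_empty, by simp⟩,
      Set.empty_subset _⟩
  · obtain ⟨U, hU, hxU⟩ := h𝒰.exists_mem x
    refine ⟨{U}, ⟨isDiscreteFam_of_subsingleton Set.subsingleton_singleton, ?_⟩, by simpa⟩
    rintro _ rfl
    exact ⟨h𝒰.1 _ hU, _, hU, subset_rfl⟩

theorem twoWinsGomega_of_markov (σ : ℕ → Set (Set X) → Set (Set X))
    (hσ : ∀ U : ℕ → Set (Set X), (∀ n, IsOpenCover (U n)) →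
      (∀ n, LegalTwoMove (U n) (σ n (U n))) ∧ Y ⊆ ⋃ n, ⋃₀ σ n (U n)) :
    TwoWinsGomega X Y := by
  refine ⟨fun h => σ (h.length - 1) (h.getLastD ∅), fun U hU => ?_⟩
  have getLastD_history (n : ℕ) : (List.ofFn fun i : Fin (n + 1) => U i).getLastD ∅ = U n := by
    rw [List.ofFn_succ', List.concat_eq_append]
    simp
  simpa only [getLastD_history, List.length_ofFn, Nat.add_sub_cancel] using hσ U hU

theorem twoWinsGomega_iUnion {Z : ℕ → Set X} (hZ : ∀ n, TwoWinsGone X (Z n)) :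
    TwoWinsGomega X (⋃ n, Z n) := by
  choose! σ hlegal hcover using hZ
  exact twoWinsGomega_of_markov σ fun U hU =>
    ⟨fun n => hlegal n (U n) (hU n), Set.iUnion_mono fun n => hcover n (U n) (hU n)⟩

theorem twoWinsGomega_of_countable (hY : Y.Countable) : TwoWinsGomega X Y := by
  obtain ⟨f, hf⟩ := Set.countable_iff_exists_injOn.1 hY
  have hY_eq : Y = ⋃ n, {y ∈ Y | f y = n} := by ext; simp
  rw [hY_eq]
  refine twoWinsGomega_iUnion fun n => twoWinsGone_of_subsingleton ?_
  rintro x ⟨hx, hfx⟩ y ⟨hy, hfy⟩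
  exact hf hx hy (hfx.trans hfy.symm)

theorem IsDiscreteFam.isClopen_closure {𝒜 : Set (Set X)} (h𝒜 : IsDiscreteFam 𝒜)
    (hdense : Dense (⋃₀ 𝒜)) {A : Set X} (hA : A ∈ 𝒜) : IsClopen (closure A) := by
  refine ⟨isClosed_closure, isOpen_iff_mem_nhds.2 fun x hx => ?_⟩
  obtain ⟨W, hW, hsub⟩ := h𝒜 x
  have hAW : (A ∩ W).Nonempty := Set.inter_comm W A ▸ mem_closure_iff_nhds.1 hx W hW
  have hunion : interior W ∩ ⋃₀ 𝒜 ⊆ A := by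
    rintro y ⟨hyW, B, hB, hyB⟩
    have hBA : B = A := hsub ⟨hB, y, hyB, interior_subset hyW⟩ ⟨hA, hAW⟩
    exact hBA ▸ hyB
  exact Filter.mem_of_superset (interior_mem_nhds.2 hW)
    ((hdense.open_subset_closure_inter isOpen_interior).trans (closure_mono hunion))

theorem TwoWinsGone.exists_dense_mem [Nonempty X] [PreconnectedSpace X] (h : TwoWinsGone X Y)
    (hY : Dense Y) {𝒰 : Set (Set X)} (h𝒰 : IsOpenCover 𝒰) : ∃ U ∈ 𝒰, Dense U := by
  obtain ⟨𝒱, ⟨hdiscrete, hrefines⟩, hcover⟩ := h 𝒰 h𝒰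
  obtain ⟨y, hy⟩ := hY.nonempty
  obtain ⟨V, hV, hyV⟩ := hcover hy
  have hclopen : IsClopen (closure V) := hdiscrete.isClopen_closure (hY.mono hcover) hV
  have hV_dense : Dense V :=
    dense_iff_closure_eq.2 (hclopen.eq_univ ⟨y, subset_closure hyV⟩)
  obtain ⟨-, U, hU, hVU⟩ := hrefines V hV
  exact ⟨U, hU, hV_dense.mono hVU⟩

theorem isOpenCover_setOf_isOpen_not_dense [T2Space X] [Nontrivial X] :
    IsOpenCover {U : Set X | IsOpen U ∧ ¬ Dense U} := by
  refine ⟨fun U hU => hU.1, Set.eq_univ_of_forall fun x => ?_⟩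
  obtain ⟨y, hyx⟩ := exists_ne x
  obtain ⟨U, V, hU, hV, hxU, hyV, hUV⟩ := t2_separation hyx.symm
  refine ⟨U, ⟨hU, fun hU_dense => ?_⟩, hxU⟩
  exact (hU_dense.inter_open_nonempty V hV ⟨y, hyV⟩).ne_empty hUV.symm.inter_eq

theorem not_twoWinsGone_of_dense [T2Space X] [Nontrivial X] [PreconnectedSpace X] (hY : Dense Y) :
    ¬ TwoWinsGone X Y := by
  intro h
  obtain ⟨U, hU, hU_dense⟩ := h.exists_dense_mem hY isOpenCover_setOf_isOpen_not_dense
  exact hU.2 hU_dense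

theorem statement15_general [T2Space X] [Nontrivial X] [PreconnectedSpace X]
    (hcount : Y.Countable) (hdense : Dense Y) : TwoWinsGomega X Y ∧ ¬ TwoWinsGone X Y :=
  ⟨twoWinsGomega_of_countable hcount, not_twoWinsGone_of_dense hdense⟩

end

/-- On the real line TWO has a winning strategy in `G^ω_d(𝒪,𝒪_ℚ)` but
not in `G^1_d(𝒪,𝒪_ℚ)`. -/
theorem statement15 :
    TwoWinsGomega ℝ (Set.range ((↑) : ℚ → ℝ)) ∧
    ¬ TwoWinsGone ℝ (Set.range ((↑) : ℚ → ℝ)) :=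
  statement15_general (Set.countable_range _) Rat.denseRange_cast

end SSG
end

section
/- Let 0 ≤ a < b ≤ 1 be real numbers and set L = b − a. Let 𝒰 be a cover of the closed interval [a,b] by sets open in the space [0,1]. Then there is a finite family 𝒱 of open subsets of [0,1], discrete in [0,1], such that each member of 𝒱 is contained in some member of 𝒰, ⋃𝒱 ⊆ [a,b], and [a,b] \ ⋃𝒱 is a union of finitely many pairwise disjoint closed intervals whose lengths add up to at most L/2. -/
namespace SSG

/-!
Cut `[a, b]` into alternating short closed intervals `[c k, d k]` and open gaps
`(d k, c (k + 1))`, starting and ending with a closed interval. If the gaps are shorter than a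
Lebesgue number of `𝒰`, each of them lies in a member of `𝒰`. Since the closed intervals between
them are nondegenerate, the gaps have pairwise disjoint closures, so that a finite number of them
form a discrete family. The total length of the closed intervals can be prescribed independently
of the number of gaps.
-/

theorem isDiscreteFam_range_of_pairwise_disjoint_closure {ι X : Type*} [TopologicalSpace X]
    {V : ι → Set X} (hfin : LocallyFinite V)
    (hdisj : Pairwise fun i j => Disjoint (closure (V i)) (closure (V j))) :
    IsDiscreteFam (Set.range V) := by
  intro x
  refine ⟨_, hfin.closure.iInter_compl_mem_nhds (fun _ => isClosed_closure) x, ?_⟩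
  have mem_closure_of_meets : ∀ i,
      (V i ∩ ⋂ (j) (_ : x ∉ closure (V j)), (closure (V j))ᶜ).Nonempty → x ∈ closure (V i) := by
    rintro i ⟨y, hyV, hy⟩
    by_contra hx
    exact Set.mem_iInter₂.1 hy i hx (subset_closure hyV)
  rintro _ ⟨⟨i, rfl⟩, hi⟩ _ ⟨⟨j, rfl⟩, hj⟩
  by_contra hne
  exact Set.disjoint_left.1 (hdisj fun hij => hne (congrArg V hij))
    (mem_closure_of_meets i hi) (mem_closure_of_meets j hj)

section AlternatingIntervals

variable {α : Type*} {c d : ℕ → α}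

theorem pairwise_disjoint_Icc_of_alternating [Preorder α] (hcd : ∀ k, c k ≤ d k)
    (hdc : ∀ k, d k < c (k + 1)) :
    Pairwise fun k l => Disjoint (Set.Icc (c k) (d k)) (Set.Icc (c l) (d l)) := by
  have hc : Monotone c := monotone_nat_of_le_succ fun k => (hcd k).trans (hdc k).le
  refine (pairwise_disjoint_on fun k => Set.Icc (c k) (d k)).2 fun k l hkl => ?_
  exact Set.disjoint_left.2 fun x hxk hxl =>
    (hxk.2.trans_lt (hdc k)).not_ge ((hc hkl).trans hxl.1)

theorem Icc_gap_subset_Icc_of_alternating [Preorder α] (hcd : ∀ k, c k ≤ d k)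
    (hdc : ∀ k, d k ≤ c (k + 1)) {k N : ℕ} (hkN : k < N) :
    Set.Icc (d k) (c (k + 1)) ⊆ Set.Icc (c 0) (d N) := by
  have hc : Monotone c := monotone_nat_of_le_succ fun k => (hcd k).trans (hdc k)
  have hd : Monotone d := monotone_nat_of_le_succ fun k => (hdc k).trans (hcd (k + 1))
  exact Set.Icc_subset_Icc ((hc k.zero_le).trans (hcd k)) ((hcd (k + 1)).trans (hd hkN))

theorem Icc_subset_iUnion_Ioo_union_iUnion_Icc [LinearOrder α] (N : ℕ) :
    Set.Icc (c 0) (d N) ⊆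
      (⋃ k : Fin N, Set.Ioo (d k) (c (k + 1))) ∪ ⋃ k : Fin (N + 1), Set.Icc (c k) (d k) := by
  rintro x ⟨hcx, hxd⟩
  have hex : ∃ k, x ≤ d k := ⟨N, hxd⟩
  have hkN : Nat.find hex ≤ N := Nat.find_min' hex hxd
  by_cases hck : c (Nat.find hex) ≤ x
  · exact .inr (Set.mem_iUnion.2 ⟨⟨_, Nat.lt_succ_of_le hkN⟩, hck, Nat.find_spec hex⟩)
  · obtain ⟨l, hl⟩ := Nat.exists_eq_succ_of_ne_zero fun h0 : Nat.find hex = 0 => hck (h0 ▸ hcx)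
    have hdl : d l < x := not_le.1 (Nat.find_min hex (by omega))
    exact .inl (Set.mem_iUnion.2 ⟨⟨l, by omega⟩, hdl, not_le.1 (hl ▸ hck)⟩)

theorem Icc_sdiff_iUnion_Ioo_eq_iUnion_Icc [LinearOrder α] (hcd : ∀ k, c k ≤ d k)
    (hdc : ∀ k, d k ≤ c (k + 1)) (N : ℕ) :
    Set.Icc (c 0) (d N) \ ⋃ k : Fin N, Set.Ioo (d k) (c (k + 1)) =
      ⋃ k : Fin (N + 1), Set.Icc (c k) (d k) := by
  have hc : Monotone c := monotone_nat_of_le_succ fun k => (hcd k).trans (hdc k)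
  have hd : Monotone d := monotone_nat_of_le_succ fun k => (hdc k).trans (hcd (k + 1))
  refine (Set.sdiff_subset_iff.2 (Icc_subset_iUnion_Ioo_union_iUnion_Icc N)).antisymm ?_
  refine Set.iUnion_subset fun k x hx =>
    ⟨⟨(hc (Nat.zero_le k)).trans hx.1, hx.2.trans (hd k.is_le)⟩, fun hgap => ?_⟩
  obtain ⟨l, hdx, hxc⟩ := Set.mem_iUnion.1 hgap
  obtain hlk | hkl := lt_or_ge (l : ℕ) k
  · exact hxc.not_ge ((hc hlk).trans hx.1)
  · exact hdx.not_ge (hx.2.trans (hd hkl))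

end AlternatingIntervals

theorem exists_alternating_gap_lt_sum_length_eq {a b ε δ : ℝ} (hε : 0 < ε) (hεab : ε < b - a)
    (hδ : 0 < δ) :
    ∃ (N : ℕ) (c d : ℕ → ℝ), c 0 = a ∧ d N = b ∧ (∀ k, c k < d k) ∧ (∀ k, d k < c (k + 1)) ∧
      (∀ k, c (k + 1) - d k < δ) ∧ ∑ k : Fin (N + 1), (d k - c k) = ε := by
  obtain ⟨N, hN⟩ := exists_nat_gt ((b - a - ε) / δ)
  have hN0 : (0 : ℝ) < N := (div_pos (sub_pos.2 hεab) hδ).trans hN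
  obtain ⟨len, hlen, hlen_mul⟩ : ∃ len > 0, (N + 1) * len = ε :=
    ⟨ε / (N + 1), by positivity, by field_simp⟩
  obtain ⟨gap, hgap, hgapδ, hgap_mul⟩ : ∃ gap > 0, gap < δ ∧ N * gap = b - a - ε :=
    ⟨(b - a - ε) / N, div_pos (sub_pos.2 hεab) hN0, (div_lt_comm₀ hδ hN0).1 hN, by field_simp⟩
  refine ⟨N, fun k => a + k * (len + gap), fun k => a + k * (len + gap) + len, by simp,
    by linarith, fun k => by linarith, fun k => ?_, fun k => ?_, by simpa using hlen_mul⟩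
  · push_cast; linarith
  · push_cast; linarith

section SubsetsOfReals

variable {S : Set ℝ} {a b : ℝ} {𝒰 : Set (Set S)}

theorem exists_pos_forall_preimage_Ioo_subset_mem (hS : Set.Icc a b ⊆ S)
    (hopen : ∀ U ∈ 𝒰, IsOpen U) (hcover : ((↑) : S → ℝ) ⁻¹' Set.Icc a b ⊆ ⋃₀ 𝒰) :
    ∃ δ > 0, ∀ s ∈ Set.Icc a b, ∀ t, t - s < δ →
      ∃ U ∈ 𝒰, ((↑) : S → ℝ) ⁻¹' Set.Ioo s t ⊆ U := by
  have hcompact : IsCompact (((↑) : S → ℝ) ⁻¹' Set.Icc a b) :=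
    (Topology.IsInducing.subtypeVal.isCompact_preimage_iff (by rwa [Subtype.range_coe])).2
      isCompact_Icc
  obtain ⟨δ, hδ, hball⟩ := lebesgue_number_lemma_of_metric_sUnion hcompact hopen hcover
  refine ⟨δ, hδ, fun s hs t hst => ?_⟩
  obtain ⟨U, hU, hsub⟩ := hball ⟨s, hS hs⟩ hs
  refine ⟨U, hU, fun x ⟨hsx, hxt⟩ => hsub ?_⟩
  rw [Metric.mem_ball, Subtype.dist_eq, Real.dist_eq, abs_of_pos (sub_pos.2 hsx)]
  linarith

theorem isDiscreteFam_range_preimage_Ioo {ι : Type*} [Finite ι] {s t : ι → ℝ}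
    (hdisj : Pairwise fun i j => Disjoint (Set.Icc (s i) (t i)) (Set.Icc (s j) (t j))) :
    IsDiscreteFam (Set.range fun i => ((↑) : S → ℝ) ⁻¹' Set.Ioo (s i) (t i)) := by
  have hclosure : ∀ i, closure (((↑) : S → ℝ) ⁻¹' Set.Ioo (s i) (t i)) ⊆
      (↑) ⁻¹' Set.Icc (s i) (t i) := fun i =>
    closure_minimal (Set.preimage_mono Set.Ioo_subset_Icc_self)
      (isClosed_Icc.preimage continuous_subtype_val)
  exact isDiscreteFam_range_of_pairwise_disjoint_closure (locallyFinite_of_finite _)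
    fun i j hij => ((hdisj hij).preimage _).mono (hclosure i) (hclosure j)

theorem statement16_general {ε : ℝ} (hε : 0 < ε) (hεab : ε < b - a) (hS : Set.Icc a b ⊆ S)
    (hopen : ∀ U ∈ 𝒰, IsOpen U) (hcover : ((↑) : S → ℝ) ⁻¹' Set.Icc a b ⊆ ⋃₀ 𝒰) :
    ∃ 𝒱 : Set (Set S), 𝒱.Finite ∧ (∀ V ∈ 𝒱, IsOpen V) ∧ IsDiscreteFam 𝒱 ∧
      (∀ V ∈ 𝒱, ∃ U ∈ 𝒰, V ⊆ U) ∧ ⋃₀ 𝒱 ⊆ (↑) ⁻¹' Set.Icc a b ∧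
      ∃ (m : ℕ) (c d : Fin m → ℝ), (∀ i, c i ≤ d i) ∧
        (∀ i j, i ≠ j → Disjoint (((↑) : S → ℝ) ⁻¹' Set.Icc (c i) (d i))
          ((↑) ⁻¹' Set.Icc (c j) (d j))) ∧
        (↑) ⁻¹' Set.Icc a b \ ⋃₀ 𝒱 = ⋃ i, (↑) ⁻¹' Set.Icc (c i) (d i) ∧
        ∑ i, (d i - c i) = ε := by
  obtain ⟨δ, hδ, hsmall⟩ := exists_pos_forall_preimage_Ioo_subset_mem hS hopen hcover
  obtain ⟨N, c, d, rfl, rfl, hcd, hdc, hgap, hsum⟩ :=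
    exists_alternating_gap_lt_sum_length_eq hε hεab hδ
  have hcd_disj := pairwise_disjoint_Icc_of_alternating (fun k => (hcd k).le) hdc
  have hgap_disj := pairwise_disjoint_Icc_of_alternating (fun k => (hdc k).le) fun k => hcd (k + 1)
  have hgap_sub (k : Fin N) : Set.Icc (d k) (c (k + 1)) ⊆ Set.Icc (c 0) (d N) :=
    Icc_gap_subset_Icc_of_alternating (fun k => (hcd k).le) (fun k => (hdc k).le) k.is_lt
  have hrefine (k : Fin N) : ∃ U ∈ 𝒰, (↑) ⁻¹' Set.Ioo (d k) (c (k + 1)) ⊆ U :=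
    hsmall _ (hgap_sub k (Set.left_mem_Icc.2 (hdc k).le)) _ (hgap k)
  refine ⟨Set.range fun k : Fin N => (↑) ⁻¹' Set.Ioo (d k) (c (k + 1)), Set.finite_range _,
    Set.forall_mem_range.2 fun k => isOpen_Ioo.preimage continuous_subtype_val,
    isDiscreteFam_range_preimage_Ioo (hgap_disj.comp_of_injective Fin.val_injective),
    Set.forall_mem_range.2 hrefine,
    Set.sUnion_subset (Set.forall_mem_range.2 fun k =>
      Set.preimage_mono (Set.Ioo_subset_Icc_self.trans (hgap_sub k))),
    N + 1, fun k => c k, fun k => d k, fun k => (hcd k).le,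
    fun i j hij => (hcd_disj (Fin.val_injective.ne hij)).preimage _, ?_, hsum⟩
  rw [Set.sUnion_range, ← Set.preimage_iUnion, ← Set.preimage_sdiff, ← Set.preimage_iUnion,
    Icc_sdiff_iUnion_Ioo_eq_iUnion_Icc (fun k => (hcd k).le) fun k => (hdc k).le]

end SubsetsOfReals

/-- the interval-splitting lemma on `[0,1]`. For `0 ≤ a < b ≤ 1` and any
cover `𝒰` of `[a,b]` by sets open in `[0,1]`, there is a finite discrete family `𝒱` of
open subsets of `[0,1]` refining `𝒰` with `⋃𝒱 ⊆ [a,b]`, such that `[a,b] \ ⋃𝒱` is a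
union of finitely many pairwise disjoint closed intervals whose lengths add up to at
most `(b-a)/2`. -/
theorem statement16 (a b : ℝ) (ha : 0 ≤ a) (hab : a < b) (hb : b ≤ 1)
    (𝒰 : Set (Set (Set.Icc (0:ℝ) 1)))
    (hopen : ∀ U ∈ 𝒰, IsOpen U)
    (hcover : {x : Set.Icc (0:ℝ) 1 | a ≤ x.1 ∧ x.1 ≤ b} ⊆ ⋃₀ 𝒰) :
    ∃ 𝒱 : Set (Set (Set.Icc (0:ℝ) 1)), 𝒱.Finite ∧
      (∀ V ∈ 𝒱, IsOpen V) ∧ IsDiscreteFam 𝒱 ∧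
      (∀ V ∈ 𝒱, ∃ U ∈ 𝒰, V ⊆ U) ∧
      ⋃₀ 𝒱 ⊆ {x : Set.Icc (0:ℝ) 1 | a ≤ x.1 ∧ x.1 ≤ b} ∧
      ∃ (m : ℕ) (c d : Fin m → ℝ), (∀ i, c i ≤ d i) ∧
        (∀ i j, i ≠ j →
          Disjoint {x : Set.Icc (0:ℝ) 1 | c i ≤ x.1 ∧ x.1 ≤ d i}
                   {x : Set.Icc (0:ℝ) 1 | c j ≤ x.1 ∧ x.1 ≤ d j}) ∧
        ({x : Set.Icc (0:ℝ) 1 | a ≤ x.1 ∧ x.1 ≤ b} \ ⋃₀ 𝒱 =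
          ⋃ i : Fin m, {x : Set.Icc (0:ℝ) 1 | c i ≤ x.1 ∧ x.1 ≤ d i}) ∧
        ∑ i : Fin m, (d i - c i) ≤ (b - a) / 2 := by
  obtain ⟨𝒱, hfin, hVopen, hdisc, hrefine, hsub, m, c, d, hcd, hdisj, hsdiff, hsum⟩ :=
    statement16_general (half_pos (sub_pos.2 hab)) (half_lt_self (sub_pos.2 hab))
      (Set.Icc_subset_Icc ha hb) hopen hcover
  exact ⟨𝒱, hfin, hVopen, hdisc, hrefine, hsub, m, c, d, hcd, hdisj, hsdiff, hsum.le⟩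

end SSG
end

section
/- Player TWO has a winning strategy in the game G^{ω+1}_d(𝒪,𝒪) on the closed unit interval [0,1]. -/
namespace SSG

/-- TWO has a winning strategy in the game `G^{ω+1}_d(𝒪,𝒪_Y)` of length `ω+1`:
a strategy consisting of a response to each finite sequence of ONE's moves (for the
innings `n < ω`) together with a response to each ω-sequence of ONE's moves followed by
ONE's final move (for the inning `ω`), such that against any legal play of ONE all
responses are legal and their union covers `Y`. -/
def TwoWinsGomegaPlusOne (X : Type*) [TopologicalSpace X] (Y : Set X) : Prop :=
  ∃ (τ : List (Set (Set X)) → Set (Set X))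
    (τω : (ℕ → Set (Set X)) → Set (Set X) → Set (Set X)),
    ∀ (U : ℕ → Set (Set X)) (Uω : Set (Set X)),
      (∀ n : ℕ, IsOpenCover (U n)) → IsOpenCover Uω →
      (∀ n : ℕ, LegalTwoMove (U n) (τ (List.ofFn fun i : Fin (n+1) => U i))) ∧
      LegalTwoMove Uω (τω U Uω) ∧
      Y ⊆ (⋃ n : ℕ, ⋃₀ τ (List.ofFn fun i : Fin (n+1) => U i)) ∪ ⋃₀ τω U Uω

/-!
In the `n`-th finite inning TWO plays the single set by which ONE covers the `n`-th point of a
dense sequence. The sets played in the first `ω` innings have a dense open union, so what is left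
for the last inning is a closed nowhere dense set `E`. In `[0,1]` such a set contains no
nondegenerate interval, hence is a totally disconnected compact set, and every open cover of it
is refined by a partition of `E` into relatively clopen pieces. Paracompactness expands the pieces
to pairwise disjoint open sets of the whole space, and normality shrinks these to a discrete family
that still covers `E`.
-/

open Set
open scoped Function

section Expansion

variable {X ι : Type*} [TopologicalSpace X] [NormalSpace X] {E : Set X}

lemma exists_pairwise_disjoint_isOpen_subset [ParacompactSpace X] (hE : IsClosed E)
    {O : ι → Set X} (hO : ∀ i, IsOpen (O i)) (hcover : E ⊆ ⋃ i, O i)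
    (hdisj : Pairwise (Disjoint on fun i ↦ E ∩ O i)) :
    ∃ U : ι → Set X, (∀ i, IsOpen (U i)) ∧ (∀ i, U i ⊆ O i) ∧
      Pairwise (Disjoint on U) ∧ E ⊆ ⋃ i, U i := by
  obtain ⟨v, hv, hEv, hv_lf, hvO⟩ := precise_refinement_set hE O hO hcover
  obtain ⟨w, hEw, hw, hwv⟩ :=
    exists_subset_iUnion_closure_subset hE hv (fun x _ ↦ hv_lf.point_finite x) hEv
  have hw_lf : LocallyFinite fun i ↦ closure (w i) := hv_lf.subset hwv
  have hclosed (i : ι) : IsClosed (⋃ j : {j // j ≠ i}, closure (w j)) :=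
    (hw_lf.comp_injective Subtype.val_injective).isClosed_iUnion fun _ ↦ isClosed_closure
  -- Removing the other closures loses no point of `E`: there the `O i` are already disjoint.
  refine ⟨fun i ↦ w i \ ⋃ j : {j // j ≠ i}, closure (w j), fun i ↦ (hw i).sdiff (hclosed i),
    fun i ↦ sdiff_subset.trans <| subset_closure.trans <| (hwv i).trans (hvO i), ?_, ?_⟩
  · intro i j hij
    exact disjoint_left.2 fun x hxi hxj ↦
      hxj.2 <| mem_iUnion.2 ⟨⟨i, hij⟩, subset_closure hxi.1⟩
  · intro x hx
    obtain ⟨i, hi⟩ := mem_iUnion.1 (hEw hx)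
    refine mem_iUnion.2 ⟨i, hi, fun hmem ↦ ?_⟩
    obtain ⟨⟨j, hji⟩, hj⟩ := mem_iUnion.1 hmem
    exact disjoint_left.1 (hdisj hji) ⟨hx, hvO j (hwv j hj)⟩
      ⟨hx, hvO i (hwv i (subset_closure hi))⟩

lemma exists_isDiscreteFam_range_subset (hE : IsClosed E) {U : ι → Set X}
    (hU : ∀ i, IsOpen (U i)) (hdisj : Pairwise (Disjoint on U)) (hcover : E ⊆ ⋃ i, U i) :
    ∃ V : ι → Set X, (∀ i, IsOpen (V i)) ∧ (∀ i, V i ⊆ U i) ∧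
      IsDiscreteFam (range V) ∧ E ⊆ ⋃ i, V i := by
  obtain ⟨G, hG, hEG, hGU⟩ := normal_exists_closure_subset hE (isOpen_iUnion hU) hcover
  refine ⟨fun i ↦ U i ∩ G, fun i ↦ (hU i).inter hG, fun i ↦ inter_subset_left, fun x ↦ ?_,
    fun x hx ↦ ?_⟩
  · by_cases hx : x ∈ closure G
    · obtain ⟨k, hk⟩ := mem_iUnion.1 (hGU hx)
      refine ⟨U k, (hU k).mem_nhds hk, ?_⟩
      have eq_of_meets : ∀ i, (U i ∩ G ∩ U k).Nonempty → i = k := fun i ⟨_, hy, hyk⟩ ↦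
        hdisj.eq (not_disjoint_iff.2 ⟨_, hy.1, hyk⟩)
      rintro _ ⟨⟨i, rfl⟩, hi⟩ _ ⟨⟨j, rfl⟩, hj⟩
      rw [eq_of_meets i hi, eq_of_meets j hj]
    · refine ⟨(closure G)ᶜ, isClosed_closure.isOpen_compl.mem_nhds hx, ?_⟩
      rintro _ ⟨⟨i, rfl⟩, y, hy, hyG⟩
      exact absurd (subset_closure hy.2) hyG
  · obtain ⟨i, hi⟩ := mem_iUnion.1 (hcover hx)
    exact mem_iUnion.2 ⟨i, hi, hEG hx⟩

end Expansion

section Ultraparacompact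

universe u

variable {X : Type u} [TopologicalSpace X]

lemma IsOpenCover.preimage_val {𝒰 : Set (Set X)} (h𝒰 : IsOpenCover 𝒰) (E : Set X) :
    IsOpenCover (preimage ((↑) : E → X) '' 𝒰) := by
  refine ⟨forall_mem_image.2 fun U hU ↦ (h𝒰.1 U hU).preimage continuous_subtype_val, ?_⟩
  rw [sUnion_image, ← preimage_iUnion₂, ← sUnion_eq_biUnion, h𝒰.2, preimage_univ]

lemma Ultraparacompact.exists_isOpen_partition {E : Set X} (hE : Ultraparacompact E)
    {𝒰 : Set (Set X)} (h𝒰 : IsOpenCover 𝒰) :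
    ∃ (ι : Type u) (O : ι → Set X), (∀ i, IsOpen (O i)) ∧ (∀ i, ∃ U ∈ 𝒰, O i ⊆ U) ∧
      Pairwise (Disjoint on fun i ↦ E ∩ O i) ∧ E ⊆ ⋃ i, O i := by
  obtain ⟨𝒜, h𝒜, hdisj, hcover⟩ := hE _ (h𝒰.preimage_val E)
  have extend (A : 𝒜) : ∃ O, IsOpen O ∧ (∃ U ∈ 𝒰, O ⊆ U) ∧ E ∩ O = (↑) '' (A : Set E) := by
    obtain ⟨hA, _, ⟨U, hU, rfl⟩, hAU⟩ := h𝒜 A A.2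
    obtain ⟨O, hO, hOA⟩ := isOpen_induced_iff.1 hA
    refine ⟨O ∩ U, hO.inter (h𝒰.1 U hU), ⟨U, hU, inter_subset_right⟩, ?_⟩
    rw [← Subtype.image_preimage_coe, preimage_inter, hOA, inter_eq_left.2 hAU]
  choose O hO hOU hEO using extend
  refine ⟨𝒜, O, hO, hOU, fun A B hAB ↦ ?_, fun x hx ↦ ?_⟩
  · simp only [Function.onFun, hEO]
    exact disjoint_image_of_injective Subtype.val_injective
      (hdisj A.2 B.2 (Subtype.coe_ne_coe.2 hAB))
  · obtain ⟨A, hA, hxA⟩ := hcover.ge (mem_univ (⟨x, hx⟩ : E))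
    exact mem_iUnion.2 ⟨⟨A, hA⟩, ((hEO ⟨A, hA⟩).ge ⟨_, hxA, rfl⟩).2⟩

theorem Ultraparacompact.twoWinsGone [NormalSpace X] [ParacompactSpace X] {E : Set X}
    (hE : Ultraparacompact E) (hclosed : IsClosed E) : TwoWinsGone X E := by
  intro 𝒰 h𝒰
  obtain ⟨ι, O, hO, hO𝒰, hdisjO, hEO⟩ := hE.exists_isOpen_partition h𝒰
  obtain ⟨U, hU, hUO, hdisjU, hEU⟩ :=
    exists_pairwise_disjoint_isOpen_subset hclosed hO hEO hdisjO
  obtain ⟨V, hV, hVU, hdiscrete, hEV⟩ := exists_isDiscreteFam_range_subset hclosed hU hdisjU hEU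
  refine ⟨range V, ⟨hdiscrete, forall_mem_range.2 fun i ↦ ⟨hV i, ?_⟩⟩, hEV⟩
  obtain ⟨W, hW, hOW⟩ := hO𝒰 i
  exact ⟨W, hW, (hVU i).trans <| (hUO i).trans hOW⟩

theorem ultraparacompact_of_compactSpace [CompactSpace X] [T2Space X]
    [TotallyDisconnectedSpace X] : Ultraparacompact X := by
  intro 𝒰 h𝒰
  have hcover : TopologicalSpace.IsOpenCover
      fun U : 𝒰 ↦ (⟨U, h𝒰.1 U U.2⟩ : TopologicalSpace.Opens X) :=
    .of_sets _ (by rw [← sUnion_eq_iUnion, h𝒰.2])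
  obtain ⟨n, W, hW, hWcover, hdisj⟩ := hcover.exists_finite_nonempty_disjoint_clopen_cover
  refine ⟨range fun j ↦ (W j : Set X), forall_mem_range.2 fun j ↦ ⟨(W j).isOpen, ?_⟩, ?_,
    univ_subset_iff.1 hWcover⟩
  · obtain ⟨U, hU⟩ := (hW j).2
    exact ⟨U, U.2, hU⟩
  · exact Pairwise.range_pairwise fun i j hij ↦
      TopologicalSpace.Clopens.coe_disjoint.2 (hdisj hij)

theorem ultraparacompact_of_isCompact_of_isTotallyDisconnected [T2Space X] {E : Set X}
    (hE : IsCompact E) (hE' : IsTotallyDisconnected E) : Ultraparacompact E := by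
  have := isCompact_iff_compactSpace.1 hE
  have := totallyDisconnectedSpace_subtype_iff.2 hE'
  exact ultraparacompact_of_compactSpace

end Ultraparacompact

lemma isTotallyDisconnected_of_isNowhereDense {X : Type*} [LinearOrder X] [TopologicalSpace X]
    [OrderClosedTopology X] [DenselyOrdered X] {E : Set X} (hE : IsNowhereDense E) :
    IsTotallyDisconnected E := by
  intro t htE ht x hx y hy
  by_contra hne
  wlog hxy : x < y generalizing x y
  · exact this hy hx (Ne.symm hne) ((not_lt.1 hxy).lt_of_ne' hne)
  have hsub : Ioo x y ⊆ interior (closure E) := isOpen_Ioo.subset_interior_iff.2 <|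
    Ioo_subset_Icc_self.trans <| (ht.Icc_subset hx hy).trans <| htE.trans subset_closure
  rw [hE] at hsub
  exact (nonempty_Ioo.2 hxy).not_subset_empty hsub

section Game

variable {X : Type*} [TopologicalSpace X]

lemma twoWinsGomegaPlusOne_of_markov {Y : Set X} (τ : ℕ → Set (Set X) → Set (Set X))
    (τω : (ℕ → Set (Set X)) → Set (Set X) → Set (Set X))
    (h : ∀ (U : ℕ → Set (Set X)) (Uω : Set (Set X)), (∀ n, IsOpenCover (U n)) → IsOpenCover Uω →
      (∀ n, LegalTwoMove (U n) (τ n (U n))) ∧ LegalTwoMove Uω (τω U Uω) ∧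
        Y ⊆ (⋃ n, ⋃₀ τ n (U n)) ∪ ⋃₀ τω U Uω) :
    TwoWinsGomegaPlusOne X Y := by
  refine ⟨fun l ↦ τ (l.length - 1) (l.getLastD ∅), τω, fun U Uω hU hUω ↦ ?_⟩
  have hlast (n : ℕ) : (List.ofFn fun i : Fin (n + 1) ↦ U i).getLastD ∅ = U n := by
    rw [List.ofFn_succ_last]
    simp
  simpa only [List.length_ofFn, Nat.add_sub_cancel, hlast] using h U Uω hU hUω

lemma legalTwoMove_singleton {𝒰 : Set (Set X)} {U : Set X} (hU : U ∈ 𝒰) (hopen : IsOpen U) :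
    LegalTwoMove 𝒰 {U} :=
  ⟨fun _ ↦ ⟨univ, Filter.univ_mem, subsingleton_singleton.anti fun _ hA ↦ hA.1⟩,
    forall_eq.2 ⟨hopen, U, hU, Subset.rfl⟩⟩

theorem twoWinsGomegaPlusOne_of_twoWinsGone_of_isNowhereDense
    [TopologicalSpace.SeparableSpace X] [Nonempty X]
    (h : ∀ E : Set X, IsClosed E → IsNowhereDense E → TwoWinsGone X E) :
    TwoWinsGomegaPlusOne X univ := by
  have hcover (𝒰 : Set (Set X)) (h𝒰 : IsOpenCover 𝒰) (x : X) : ∃ U ∈ 𝒰, x ∈ U :=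
    h𝒰.2.ge (mem_univ x)
  choose! pick hpick_mem hmem_pick using hcover
  choose! respond hrespond using h
  let q := TopologicalSpace.denseSeq X
  refine twoWinsGomegaPlusOne_of_markov (fun n 𝒰 ↦ {pick 𝒰 (q n)})
    (fun U Uω ↦ respond (⋃ n, pick (U n) (q n))ᶜ Uω) fun U Uω hU hUω ↦ ?_
  have hopen (n : ℕ) : IsOpen (pick (U n) (q n)) := (hU n).1 _ (hpick_mem _ (hU n) _)
  have hdense : Dense (⋃ n, pick (U n) (q n)) :=
    (TopologicalSpace.denseRange_denseSeq X).mono <|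
      range_subset_iff.2 fun n ↦ mem_iUnion.2 ⟨n, hmem_pick _ (hU n) _⟩
  obtain ⟨hclosed, hnowhere⟩ :
      IsClosed (⋃ n, pick (U n) (q n))ᶜ ∧ IsNowhereDense (⋃ n, pick (U n) (q n))ᶜ := by
    rw [isClosed_isNowhereDense_iff_compl, compl_compl]
    exact ⟨isOpen_iUnion hopen, hdense⟩
  obtain ⟨hlegal, hrest⟩ := hrespond _ hclosed hnowhere Uω hUω
  refine ⟨fun n ↦ legalTwoMove_singleton (hpick_mem _ (hU n) _) (hopen n), hlegal, ?_⟩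
  simp only [sUnion_singleton]
  rw [← union_compl_self (⋃ n, pick (U n) (q n))]
  exact union_subset_union_right _ hrest

theorem statement17_general [NormalSpace X] [ParacompactSpace X]
    [TopologicalSpace.SeparableSpace X] [Nonempty X]
    (h : ∀ E : Set X, IsClosed E → IsNowhereDense E → Ultraparacompact E) :
    TwoWinsGomegaPlusOne X univ :=
  twoWinsGomegaPlusOne_of_twoWinsGone_of_isNowhereDense fun E hE hE' ↦ (h E hE hE').twoWinsGone hE

end Game

/-- TWO has a winning strategy in `G^{ω+1}_d(𝒪,𝒪)` on the closed unit
interval `[0,1]`. -/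
theorem statement17 : TwoWinsGomegaPlusOne ↥(Set.Icc (0:ℝ) 1) Set.univ :=
  statement17_general fun _ hclosed hnowhere ↦
    ultraparacompact_of_isCompact_of_isTotallyDisconnected hclosed.isCompact
      (isTotallyDisconnected_of_isNowhereDense hnowhere)

end SSG
end
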